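/- Let ε > 0 be a constant. For all sufficiently large n the following holds in the balancing circuit model on a graph with n vertices and round matrix satisfying λ(M) < 1: if x^{(0)} ∈ ℤ^n is a non-negative load vector with ‖x^{(0)}‖₁ ≤ n^{1−ε}, then after t = τ_cont(1, n^{−1}) rounds of the discrete process with independent uniformly random orientations, the discrepancy of x^{(t)} is at most 9/ε with probability at least 1 − 2n^{−1}. -/

import Mathlib

namespace LB


/-- A matching on the vertex set `Fin n`, encoded as an involution;
`f u = u` means that `u` is unmatched, and `f u = v ≠ u` means `{u,v}`
is an edge of the matching. -/
structure Matching (n : ℕ) where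
  f : Fin n → Fin n
  invol : ∀ u, f (f u) = u

/-- The matching matrix of a matching: entries `1/2` at `(u,u)`, `(u,v)`, `(v,u)`, `(v,v)`
for matched pairs `{u,v}`, entry `1` at `(w,w)` for unmatched `w`, and `0` otherwise. -/
noncomputable def Matching.matrix {n : ℕ} (m : Matching n) : Matrix (Fin n) (Fin n) ℝ :=
  Matrix.of fun u v =>
    if m.f u = u then (if v = u then 1 else 0)
    else if v = u ∨ v = m.f u then (1 : ℝ) / 2 else 0

/-- `M^{[t₁,t₂]} = M^{(t₁)} * ⋯ * M^{(t₂)}` (the identity matrix if `t₁ > t₂`). -/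
noncomputable def prodMatrix {n : ℕ} (M : ℕ → Matching n) (t₁ t₂ : ℕ) : Matrix (Fin n) (Fin n) ℝ :=
  ((List.range' t₁ (t₂ + 1 - t₁)).map fun s => (M s).matrix).prod

/-- Sum of `g u v` over the matched pairs `[u:v]` (i.e. `{u,v}` in the matching with `u < v`). -/
noncomputable def pairSum {n : ℕ} (m : Matching n) (g : Fin n → Fin n → ℝ) : ℝ :=
  ∑ u : Fin n, if u < m.f u then g u (m.f u) else 0

/-- The discrepancy `max_{u,v} |x_u - x_v|` of a load vector. -/
noncomputable def disc {n : ℕ} (x : Fin n → ℝ) : ℝ :=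
  ⨆ u : Fin n, ⨆ v : Fin n, |x u - x v|

/-- Discrepancy of an integer load vector. -/
noncomputable def discZ {n : ℕ} (x : Fin n → ℤ) : ℝ := disc fun u => (x u : ℝ)

/-- The time interval `[t₁,t₂]` (with its matchings) is `(K,ε)`-smoothing. -/
def IsSmoothing {n : ℕ} (M : ℕ → Matching n) (t₁ t₂ : ℕ) (K ε : ℝ) : Prop :=
  ∀ ξ : Fin n → ℝ, disc ξ ≤ K → disc (Matrix.vecMul ξ (prodMatrix M (t₁ + 1) t₂)) ≤ ε

/-- `τ_cont(K,ε)`: the minimum `t` such that `[0,t]` is `(K,ε)`-smoothing. -/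
noncomputable def tauCont {n : ℕ} (M : ℕ → Matching n) (K ε : ℝ) : ℕ :=
  sInf {t : ℕ | IsSmoothing M 0 t K ε}

/-- One round of the discrete process: two matched nodes split their total load,
the node indicated by the orientation bit (stored at the pair `(min,max)`) receiving
the excess token; `φ u v = true` for `u < v` means the excess token goes to `u`. -/
def step {n : ℕ} (m : Matching n) (φ : Fin n → Fin n → Bool) (x : Fin n → ℤ) :
    Fin n → ℤ := fun u =>
  if m.f u = u then x u
  else if u < m.f u then
    (if φ u (m.f u) then Int.ediv (x u + x (m.f u) + 1) 2
     else Int.ediv (x u + x (m.f u)) 2)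
  else
    (if φ (m.f u) u then Int.ediv (x u + x (m.f u)) 2
     else Int.ediv (x u + x (m.f u) + 1) 2)

/-- The discrete process started at round `t₁` from load vector `x`:
`loadsFrom M t₁ Φ x r` is the load vector `r` rounds later; the `(r+1)`-st
step uses the matching `M (t₁+r+1)` and the orientations `Φ (r+1)`. -/
def loadsFrom {n : ℕ} (M : ℕ → Matching n) (t₁ : ℕ) (Φ : ℕ → Fin n → Fin n → Bool)
    (x : Fin n → ℤ) : ℕ → Fin n → ℤ
  | 0 => x
  | r + 1 => step (M (t₁ + r + 1)) (Φ (r + 1)) (loadsFrom M t₁ Φ x r)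

/-- The discrete process started at round `0`; round `t ≥ 1` uses matching `M t`. -/
def loads {n : ℕ} (M : ℕ → Matching n) (Φ : ℕ → Fin n → Fin n → Bool)
    (x : Fin n → ℤ) : ℕ → Fin n → ℤ := loadsFrom M 0 Φ x

/-- Extend a finite family of random choices (one for each of the rounds `1,…,T`)
to all rounds: round `s` reads index `s-1`. -/
def lift {A : Type*} (a₀ : A) {T : ℕ} (ω : Fin T → A) : ℕ → A := fun s =>
  if h : s - 1 < T then ω ⟨s - 1, h⟩ else a₀

/-- Default (irrelevant) orientation. -/
def orientDefault (n : ℕ) : Fin n → Fin n → Bool := fun _ _ => true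

/-- Probability of an event under the uniform distribution on a finite sample space;
this makes all the per-round random choices independent and uniform. -/
noncomputable def pr {Ω : Type*} [Fintype Ω] (A : Ω → Prop) : ℝ :=
  haveI := Classical.decPred A
  ((Finset.univ.filter A).card : ℝ) / (Fintype.card Ω : ℝ)

/-- Expectation under the uniform distribution on a finite sample space. -/
noncomputable def ex {Ω : Type*} [Fintype Ω] (Z : Ω → ℝ) : ℝ :=
  (∑ ω : Ω, Z ω) / (Fintype.card Ω : ℝ)

/-- `λ(M) = max{|λ₂(M)|, |λ_n(M)|}` for a symmetric doubly stochastic matrix `M`,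
characterized as the operator norm of `M` on the subspace orthogonal to `𝟙`. -/
noncomputable def lamMax {n : ℕ} (M : Matrix (Fin n) (Fin n) ℝ) : ℝ :=
  ⨆ x : {x : Fin n → ℝ // (∑ u, x u) = 0 ∧ (∑ u, (x u) ^ 2) = 1},
    Real.sqrt (∑ u, (M.mulVec x.1 u) ^ 2)

/-- The round matrix `M = M^{(1)} ⋯ M^{(d)}` of the balancing circuit. -/
noncomputable def roundMatrix {n d : ℕ} (Ms : Fin d → Matching n) : Matrix (Fin n) (Fin n) ℝ :=
  (List.ofFn fun i => (Ms i).matrix).prod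

/-- The periodic sequence of matchings of the balancing circuit:
round `t` uses `M^{(((t-1) mod d)+1)}`. -/
def circuit {n d : ℕ} (hd : 0 < d) (Ms : Fin d → Matching n) : ℕ → Matching n :=
  fun t => Ms ⟨(t - 1) % d, Nat.mod_lt _ hd⟩



lemma mv_apply {n : ℕ} (m : Matching n) (g : Fin n → ℝ) (u : Fin n) :
    (m.matrix.mulVec g) u = (g u + g (m.f u)) / 2 := by
  unfold Matching.matrix Matrix.mulVec dotProduct
  simp only [Matrix.of_apply]
  by_cases h : m.f u = u
  · simp [h]
  · simp only [h, if_false]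
    have : ∀ v, (if v = u ∨ v = m.f u then (1:ℝ)/2 else 0) * g v
        = (if v = u then g v / 2 else 0) + (if v = m.f u then g v / 2 else 0) := by
      intro v
      by_cases h1 : v = u
      · have h2 : ¬ (v = m.f u) := fun e => h (by rw [← e, h1])
        have h3 : ¬ (u = m.f u) := fun e => h e.symm
        simp [h1, h3]; ring
      · by_cases h2 : v = m.f u
        · simp [h2, h]; ring
        · simp [h1, h2]
    rw [Finset.sum_congr rfl (fun v _ => this v), Finset.sum_add_distrib]
    simp; ring

def meq {n : ℕ} (m : Matching n) : Fin n ≃ Fin n := ⟨m.f, m.f, m.invol, m.invol⟩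

lemma mv_sum {n : ℕ} (m : Matching n) (g : Fin n → ℝ) :
    ∑ u, (m.matrix.mulVec g) u = ∑ u, g u := by
  simp only [mv_apply, ← Finset.sum_div, Finset.sum_add_distrib]
  have := Equiv.sum_comp (meq m) g
  change ∑ u, g (m.f u) = _ at this
  rw [this]; ring

lemma mv_one {n : ℕ} (m : Matching n) : m.matrix.mulVec (fun _ => 1) = fun _ => 1 := by
  funext u; rw [mv_apply]; norm_num

lemma list_sum {n : ℕ} (l : List (Matching n)) (g : Fin n → ℝ) :
    ∑ u, ((l.map fun m : Matching n => m.matrix).prod.mulVec g) u = ∑ u, g u := by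
  induction l with
  | nil => simp
  | cons a l ih => rw [List.map_cons, List.prod_cons, ← Matrix.mulVec_mulVec, mv_sum, ih]

lemma list_one {n : ℕ} (l : List (Matching n)) :
    ((l.map fun m : Matching n => m.matrix).prod.mulVec (fun _ => 1)) = fun _ => 1 := by
  induction l with
  | nil => simp
  | cons a l ih => rw [List.map_cons, List.prod_cons, ← Matrix.mulVec_mulVec, ih, mv_one]

lemma prod_group {n : ℕ} (m : Matching n) (F : Fin n → ℝ) :
    ∏ u, F u = ∏ u, (if m.f u = u then F u else if u < m.f u then F u * F (m.f u) else 1) := by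
  have h1 : ∀ u, (if m.f u = u then F u else if u < m.f u then F u * F (m.f u) else 1)
      = (if u ≤ m.f u then F u else 1) * (if u < m.f u then F (m.f u) else 1) := by
    intro u
    rcases lt_trichotomy u (m.f u) with h | h | h
    · simp [h, h.le, h.ne']
    · rw [if_pos h.symm, if_pos h.le, if_neg (by rw [← h]; exact lt_irrefl _), mul_one]
    · simp [h.ne, not_le.2 h, not_lt.2 h.le]
  rw [Finset.prod_congr rfl (fun u _ => h1 u), Finset.prod_mul_distrib]
  have h2 := Equiv.prod_comp (meq m) (fun u => if u < m.f u then F (m.f u) else 1)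
  change ∏ u, (if m.f u < m.f (m.f u) then F (m.f (m.f u)) else 1) = _ at h2
  rw [← h2, ← Finset.prod_mul_distrib]
  refine Finset.prod_congr rfl fun u _ => ?_
  rw [m.invol]
  by_cases h : u ≤ m.f u
  · simp [h, not_lt.2 h]
  · simp [h, not_le.1 h]

lemma step_nonneg {n : ℕ} (m : Matching n) (φ : Fin n → Fin n → Bool) (x : Fin n → ℤ)
    (hx : ∀ u, 0 ≤ x u) : ∀ u, 0 ≤ step m φ x u := by
  intro u
  have h1 := hx u
  have h2 := hx (m.f u)
  have e1 : 0 ≤ Int.ediv (x u + x (m.f u) + 1) 2 := Int.ediv_nonneg (by omega) (by norm_num)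
  have e2 : 0 ≤ Int.ediv (x u + x (m.f u)) 2 := Int.ediv_nonneg (by omega) (by norm_num)
  unfold step
  split_ifs <;> assumption

lemma loads_nonneg {n : ℕ} (M : ℕ → Matching n) (Φ : ℕ → Fin n → Fin n → Bool) (x : Fin n → ℤ)
    (hx : ∀ u, 0 ≤ x u) (t : ℕ) : ∀ u, 0 ≤ loads M Φ x t u := by
  induction t with
  | zero => exact hx
  | succ t ih => exact step_nonneg _ _ _ ih

lemma sum_bit {n : ℕ} (v : Fin n) (h : Bool → ℝ) :
    ∑ r : Fin n → Bool, h (r v) = (Fintype.card (Fin n → Bool) : ℝ) * ((h true + h false) / 2) := by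
  have e := Equiv.sum_comp (Equiv.piCongrRight (fun _ : Fin n => Equiv.boolNot))
    (fun r : Fin n → Bool => h (r v))
  have e2 : ∑ r : Fin n → Bool, (h (r v) + h (!(r v))) = ∑ r : Fin n → Bool, (h true + h false) := by
    refine Finset.sum_congr rfl fun r _ => ?_
    cases r v <;> simp [add_comm]
  rw [Finset.sum_add_distrib] at e2
  have e3 : ∑ r : Fin n → Bool, h (!(r v)) = ∑ r : Fin n → Bool, h (r v) := e
  rw [e3, Finset.sum_const, nsmul_eq_mul, Finset.card_univ] at e2
  linarith

lemma pair_ineq (a b : ℝ) (ha : 0 ≤ a) (hb : 0 ≤ b) (p q : ℤ) (hp : 0 ≤ p) (hq : 0 ≤ q) :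
    (a ^ (Int.ediv (p + q + 1) 2).toNat * b ^ (Int.ediv (p + q) 2).toNat
      + a ^ (Int.ediv (p + q) 2).toNat * b ^ (Int.ediv (p + q + 1) 2).toNat) / 2
    ≤ ((a + b) / 2) ^ p.toNat * ((b + a) / 2) ^ q.toNat := by
  have ham : a * b ≤ ((a + b) / 2) ^ 2 := by nlinarith [sq_nonneg (a - b)]
  have hab : 0 ≤ a * b := mul_nonneg ha hb
  rw [add_comm b a, ← pow_add]
  obtain ⟨k, hk | hk⟩ : ∃ k : ℕ, p + q = 2 * k ∨ p + q = 2 * k + 1 :=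
    ⟨((p + q) / 2).toNat, by omega⟩
  · have e1 : (Int.ediv (p + q + 1) 2).toNat = k := by
      change ((p + q + 1) / 2).toNat = k; omega
    have e2 : (Int.ediv (p + q) 2).toNat = k := by
      change ((p + q) / 2).toNat = k; omega
    have e3 : p.toNat + q.toNat = 2 * k := by omega
    rw [e1, e2, e3, pow_mul, ← mul_pow]
    have := pow_le_pow_left₀ hab ham k
    linarith
  · have e1 : (Int.ediv (p + q + 1) 2).toNat = k + 1 := by
      change ((p + q + 1) / 2).toNat = k + 1; omega
    have e2 : (Int.ediv (p + q) 2).toNat = k := by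
      change ((p + q) / 2).toNat = k; omega
    have e3 : p.toNat + q.toNat = 2 * k + 1 := by omega
    rw [e1, e2, e3, pow_succ ((a + b) / 2), pow_mul]
    have := pow_le_pow_left₀ hab ham k
    calc _ = (a * b) ^ k * ((a + b) / 2) := by rw [mul_pow]; ring
      _ ≤ _ := mul_le_mul_of_nonneg_right this (by positivity)

/-- grouped contribution -/
noncomputable def hh {n : ℕ} (m : Matching n) (g : Fin n → ℝ) (x : Fin n → ℤ) (u : Fin n)
    (b : Bool) : ℝ :=
  if m.f u = u then g u ^ (x u).toNat else if u < m.f u then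
    (if b then g u ^ (Int.ediv (x u + x (m.f u) + 1) 2).toNat *
      g (m.f u) ^ (Int.ediv (x u + x (m.f u)) 2).toNat
     else g u ^ (Int.ediv (x u + x (m.f u)) 2).toNat *
      g (m.f u) ^ (Int.ediv (x u + x (m.f u) + 1) 2).toNat) else 1

lemma step_sum {n : ℕ} (m : Matching n) (g : Fin n → ℝ) (hg : ∀ u, 0 ≤ g u) (x : Fin n → ℤ)
    (hx : ∀ u, 0 ≤ x u) :
    ∑ φ : Fin n → Fin n → Bool, ∏ u, g u ^ (step m φ x u).toNat
    ≤ (Fintype.card (Fin n → Fin n → Bool) : ℝ) * ∏ u, (m.matrix.mulVec g u) ^ (x u).toNat := by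
  have h1 : ∀ φ : Fin n → Fin n → Bool, ∏ u, g u ^ (step m φ x u).toNat
      = ∏ u, hh m g x u (φ u (m.f u)) := by
    intro φ
    rw [prod_group m]
    refine Finset.prod_congr rfl fun u _ => ?_
    unfold hh
    by_cases h : m.f u = u
    · simp [h, step]
    · rw [if_neg h, if_neg h]
      by_cases h2 : u < m.f u
      · have h3 : ¬ (u = m.f u) := fun e => h e.symm
        rw [if_pos h2, if_pos h2]
        unfold step
        rw [m.invol, if_neg h, if_neg h3, if_pos h2, if_neg (not_lt.2 h2.le)]
        rw [add_comm (x (m.f u)) (x u)]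
        cases φ u (m.f u) <;> simp
      · rw [if_neg h2, if_neg h2]
  rw [Finset.sum_congr rfl (fun φ _ => h1 φ)]
  have h2 : ∑ φ : Fin n → Fin n → Bool, ∏ u, hh m g x u (φ u (m.f u))
      = ∏ u, ∑ r : Fin n → Bool, hh m g x u (r (m.f u)) := by
    rw [Finset.prod_univ_sum]
    simp
  rw [h2]
  have h3 : (Fintype.card (Fin n → Fin n → Bool) : ℝ)
      = ∏ u : Fin n, (Fintype.card (Fin n → Bool) : ℝ) := by
    rw [Fintype.card_fun (α := Fin n) (β := Fin n → Bool)]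
    simp
  rw [h3, prod_group m (fun u => (m.matrix.mulVec g u) ^ (x u).toNat), ← Finset.prod_mul_distrib]
  refine Finset.prod_le_prod (fun u _ => ?_) (fun u _ => ?_)
  · refine Finset.sum_nonneg fun r _ => ?_
    unfold hh
    have := hg u
    have := hg (m.f u)
    split_ifs <;> positivity
  · rw [sum_bit]
    refine mul_le_mul_of_nonneg_left ?_ (by positivity)
    unfold hh
    by_cases h : m.f u = u
    · simp only [if_pos h, mv_apply, h]
      simp
    · simp only [if_neg h]
      by_cases h2 : u < m.f u
      · simp only [if_pos h2, mv_apply, m.invol]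
        simpa using pair_ineq (g u) (g (m.f u)) (hg _) (hg _) (x u) (x (m.f u)) (hx _) (hx _)
      · simp only [if_neg h2]; norm_num

lemma loads_congr {n : ℕ} (M : ℕ → Matching n) (Φ Ψ : ℕ → Fin n → Fin n → Bool) (x : Fin n → ℤ)
    (t : ℕ) (h : ∀ s, 1 ≤ s → s ≤ t → Φ s = Ψ s) : loads M Φ x t = loads M Ψ x t := by
  induction t with
  | zero => rfl
  | succ t ih =>
    change step _ (Φ (t+1)) (loads M Φ x t) = step _ (Ψ (t+1)) (loads M Ψ x t)
    rw [ih (fun s h1 h2 => h s h1 (by omega)), h (t+1) (by omega) le_rfl]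

lemma prodMatrix_succ {n : ℕ} (M : ℕ → Matching n) (T : ℕ) :
    prodMatrix M 1 (T + 1) = prodMatrix M 1 T * (M (T + 1)).matrix := by
  unfold prodMatrix
  rw [show T + 1 + 1 - 1 = T + 1 by omega, show T + 1 - 1 = T by omega, List.range'_concat]
  simp [add_comm]

lemma main_sum {n : ℕ} (M : ℕ → Matching n) (x : Fin n → ℤ) (hx : ∀ u, 0 ≤ x u) (T : ℕ) :
    ∀ g : Fin n → ℝ, (∀ u, 0 ≤ g u) →
    ∑ ω : Fin T → Fin n → Fin n → Bool,
      ∏ u, g u ^ (loads M (lift (orientDefault n) ω) x T u).toNat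
    ≤ (Fintype.card (Fin T → Fin n → Fin n → Bool) : ℝ) *
      ∏ u, ((prodMatrix M 1 T).mulVec g u) ^ (x u).toNat := by
  induction T with
  | zero =>
    intro g hg
    simp [prodMatrix, loads, loadsFrom]
  | succ T ih =>
    intro g hg
    rw [← Equiv.sum_comp (Fin.snocEquiv (fun _ : Fin (T+1) => (Fin n → Fin n → Bool)))]
    rw [Fintype.sum_prod_type, Finset.sum_comm]
    have key : ∀ (ω : Fin T → Fin n → Fin n → Bool) (φ : Fin n → Fin n → Bool),
        loads M (lift (orientDefault n)
          (Fin.snocEquiv (fun _ : Fin (T+1) => (Fin n → Fin n → Bool)) (φ, ω))) x (T+1)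
        = step (M (T+1)) φ (loads M (lift (orientDefault n) ω) x T) := by
      intro ω φ
      have a1 : lift (orientDefault n)
          (Fin.snocEquiv (fun _ : Fin (T+1) => (Fin n → Fin n → Bool)) (φ, ω)) (T+1) = φ := by
        simp [lift, Fin.snocEquiv, Fin.snoc]
      have a2 : loads M (lift (orientDefault n)
          (Fin.snocEquiv (fun _ : Fin (T+1) => (Fin n → Fin n → Bool)) (φ, ω))) x T
          = loads M (lift (orientDefault n) ω) x T := by
        apply loads_congr
        intro s h1 h2
        have b1 : s - 1 < T := by omega
        have b2 : s - 1 < T + 1 := by omega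
        simp [lift, Fin.snocEquiv, Fin.snoc, b1, b2]
      change step (M (0 + T + 1)) _ (loads M _ x T) = _
      rw [a1, a2, zero_add]
    simp only [key]
    have hg' : ∀ u, 0 ≤ (M (T+1)).matrix.mulVec g u := by
      intro u
      rw [mv_apply]
      have := hg u
      have := hg ((M (T+1)).f u)
      positivity
    have c : (Fintype.card (Fin (T+1) → Fin n → Fin n → Bool) : ℝ)
        = (Fintype.card (Fin n → Fin n → Bool) : ℝ)
          * (Fintype.card (Fin T → Fin n → Fin n → Bool) : ℝ) := by
      rw [Fintype.card_fun (α := Fin (T+1)) (β := Fin n → Fin n → Bool),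
        Fintype.card_fun (α := Fin T) (β := Fin n → Fin n → Bool), Fintype.card_fin,
        Fintype.card_fin, pow_succ']
      push_cast; rfl
    rw [c, mul_assoc, prodMatrix_succ, ← Matrix.mulVec_mulVec]
    refine le_trans (Finset.sum_le_sum fun ω _ => step_sum (M (T+1)) g hg _
      (loads_nonneg M _ x hx T)) ?_
    rw [← Finset.mul_sum]
    exact mul_le_mul_of_nonneg_left (ih _ hg') (by positivity)

lemma le_disc {n : ℕ} (x : Fin n → ℝ) (u v : Fin n) : |x u - x v| ≤ disc x := by
  unfold disc
  exact le_trans (le_ciSup (f := fun v => |x u - x v|) (Set.finite_range _).bddAbove v)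
    (le_ciSup (f := fun u => ⨆ v, |x u - x v|) (Set.finite_range _).bddAbove u)

lemma disc_le {n : ℕ} (x : Fin n → ℝ) (c : ℝ) (hc : 0 ≤ c) (h : ∀ u v, |x u - x v| ≤ c) :
    disc x ≤ c :=
  Real.iSup_le (fun u => Real.iSup_le (fun v => h u v) hc) hc

lemma entry_bound {n : ℕ} (hn : 0 < n) (M : ℕ → Matching n) (t : ℕ)
    (h : IsSmoothing M 0 t 1 ((n:ℝ)⁻¹)) (u v : Fin n) : prodMatrix M 1 t u v ≤ 2 / n := by
  have h1 := h (Pi.single u 1) (disc_le _ _ (by norm_num) (by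
    intro a b
    simp only [Pi.single_apply]
    split_ifs <;> norm_num))
  simp only [zero_add, Matrix.single_one_vecMul] at h1
  have h2 : ∀ w, prodMatrix M 1 t u v ≤ prodMatrix M 1 t u w + (n:ℝ)⁻¹ := by
    intro w
    have := (le_disc _ v w).trans h1
    have := (abs_le.1 this).2
    simp only [Matrix.row] at this
    linarith
  have h3 : ∑ w, prodMatrix M 1 t u w = 1 := by
    have e : prodMatrix M 1 t = (((List.range' 1 (t + 1 - 1)).map M).map fun m : Matching n => m.matrix).prod := by
      unfold prodMatrix; rw [List.map_map]; rfl
    have := congrFun (list_one ((List.range' 1 (t + 1 - 1)).map M)) u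
    rw [← e] at this
    simpa [Matrix.mulVec, dotProduct] using this
  have h4 := Finset.sum_le_sum (s := Finset.univ) (fun w _ => h2 w)
  rw [Finset.sum_add_distrib, h3] at h4
  have hn' : (0:ℝ) < n := by exact_mod_cast hn
  simp only [Finset.sum_const, Finset.card_univ, Fintype.card_fin, nsmul_eq_mul] at h4
  rw [mul_inv_cancel₀ hn'.ne'] at h4
  rw [le_div_iff₀ hn']
  linarith

lemma lam_bdd {n : ℕ} (M : Matrix (Fin n) (Fin n) ℝ) :
    BddAbove (Set.range fun x : {x : Fin n → ℝ // (∑ u, x u) = 0 ∧ (∑ u, (x u) ^ 2) = 1} =>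
      Real.sqrt (∑ u, (M.mulVec x.1 u) ^ 2)) := by
  refine ⟨Real.sqrt (∑ u, (∑ v, |M u v|) ^ 2), ?_⟩
  rintro _ ⟨⟨x, h0, h1⟩, rfl⟩
  refine Real.sqrt_le_sqrt (Finset.sum_le_sum fun u _ => ?_)
  rw [← sq_abs]
  refine pow_le_pow_left₀ (abs_nonneg _) ?_ 2
  unfold Matrix.mulVec dotProduct
  refine (Finset.abs_sum_le_sum_abs _ _).trans (Finset.sum_le_sum fun v _ => ?_)
  rw [abs_mul]
  have : |x v| ≤ 1 := by
    have := Finset.single_le_sum (f := fun u => x u ^ 2) (fun i _ => sq_nonneg _) (Finset.mem_univ v)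
    rw [h1] at this
    exact abs_le_one_iff_mul_self_le_one.2 (by nlinarith)
  nlinarith [abs_nonneg (M u v)]

lemma lam_nonneg {n : ℕ} (M : Matrix (Fin n) (Fin n) ℝ) : 0 ≤ lamMax M :=
  Real.iSup_nonneg fun _ => Real.sqrt_nonneg _

lemma lam_contr {n : ℕ} (M : Matrix (Fin n) (Fin n) ℝ) (y : Fin n → ℝ) (hy : ∑ u, y u = 0) :
    ∑ u, (M.mulVec y u) ^ 2 ≤ lamMax M ^ 2 * ∑ u, y u ^ 2 := by
  set S := ∑ u, y u ^ 2 with hS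
  have hS0 : 0 ≤ S := Finset.sum_nonneg fun _ _ => sq_nonneg _
  rcases hS0.eq_or_lt with h | h
  · have : y = 0 := by
      funext u
      have := (Finset.sum_eq_zero_iff_of_nonneg (fun u _ => sq_nonneg (y u))).1 (hS.symm.trans h.symm) u
        (Finset.mem_univ u)
      simpa using this
    rw [← h, this]; simp
  · have hr : 0 < Real.sqrt S := Real.sqrt_pos.2 h
    have hsq : Real.sqrt S ^ 2 = S := Real.sq_sqrt hS0
    set c := (Real.sqrt S)⁻¹ with hc
    have hc2 : c ^ 2 * S = 1 := by rw [hc, inv_pow, hsq]; exact inv_mul_cancel₀ h.ne'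
    have key := le_ciSup (lam_bdd M) ⟨c • y, by
      simp only [Pi.smul_apply, smul_eq_mul, ← Finset.mul_sum, hy, mul_zero], by
      simp only [Pi.smul_apply, smul_eq_mul, mul_pow, ← Finset.mul_sum]
      exact hc2⟩
    change Real.sqrt (∑ u, (M.mulVec (c • y) u) ^ 2) ≤ lamMax M at key
    rw [Real.sqrt_le_left (lam_nonneg M), Matrix.mulVec_smul] at key
    simp only [Pi.smul_apply, smul_eq_mul, mul_pow, ← Finset.mul_sum] at key
    have := mul_le_mul_of_nonneg_right key hS0
    rwa [mul_right_comm, hc2, one_mul] at this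

lemma prodMatrix_circuit {n d : ℕ} (hd : 0 < d) (Ms : Fin d → Matching n) (k : ℕ) :
    prodMatrix (circuit hd Ms) 1 (k * d) = roundMatrix Ms ^ k := by
  induction k with
  | zero => simp [prodMatrix]
  | succ k ih =>
    rw [pow_succ, ← ih]
    unfold prodMatrix roundMatrix
    rw [show (k+1)*d + 1 - 1 = k * d + d by rw [add_mul]; omega, show k * d + 1 - 1 = k * d by omega,
      ← List.range'_append_1, List.map_append, List.prod_append]
    congr 2
    apply List.ext_getElem
    · simp
    · intro i h1 h2
      simp only [List.length_map, List.length_range'] at h1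
      simp only [List.getElem_map, List.getElem_range', List.getElem_ofFn, circuit]
      congr 3
      have : 1 + k * d + 1 * i - 1 = i + d * k := by rw [mul_comm]; omega
      rw [this, Nat.add_mul_mod_self_left, Nat.mod_eq_of_lt h1]

lemma smoothing_exists {n d : ℕ} (hn : 0 < n) (hd : 0 < d) (Ms : Fin d → Matching n)
    (hl : lamMax (roundMatrix Ms) < 1) :
    ∃ t, IsSmoothing (circuit hd Ms) 0 t 1 ((n:ℝ)⁻¹) := by
  have hn' : (0:ℝ) < n := by exact_mod_cast hn
  set q := lamMax (roundMatrix Ms) with hq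
  have hq0 : 0 ≤ q := lam_nonneg _
  have hsum : ∀ y : Fin n → ℝ, ∑ u, (roundMatrix Ms).mulVec y u = ∑ u, y u := by
    intro y
    have := list_sum (List.ofFn Ms) y
    rwa [List.map_ofFn] at this
  have hpow : ∀ k, ∀ y : Fin n → ℝ, ∑ u, y u = 0 →
      ∑ u, ((roundMatrix Ms ^ k).mulVec y u) ^ 2 ≤ (q ^ k) ^ 2 * ∑ u, y u ^ 2 := by
    intro k
    induction k with
    | zero => intro y _; simp
    | succ k ih =>
      intro y hy
      rw [pow_succ, ← Matrix.mulVec_mulVec]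
      refine (ih _ (by rw [hsum, hy])).trans ?_
      refine (mul_le_mul_of_nonneg_left (lam_contr _ y hy) (by positivity)).trans (le_of_eq ?_)
      rw [← hq]; ring
  obtain ⟨k, hk⟩ := exists_pow_lt_of_lt_one (show (0:ℝ) < 1 / (2 * n * n) by positivity) hl
  refine ⟨k * d, ?_⟩
  intro ξ hξ
  rw [zero_add, prodMatrix_circuit]
  set P := roundMatrix Ms ^ k with hP
  refine disc_le _ _ (by positivity) ?_
  intro v w
  set y : Fin n → ℝ := Pi.single v 1 - Pi.single w 1 with hy
  have hy0 : ∑ u, y u = 0 := by simp [hy]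
  have hyb : ∑ u, y u ^ 2 ≤ 4 := by
    have : ∀ u, y u ^ 2 ≤ 2 * Pi.single (M := fun _ => ℝ) v 1 u + 2 * Pi.single (M := fun _ => ℝ) w 1 u := by
      intro u
      simp only [hy, Pi.sub_apply, Pi.single_apply]
      split_ifs <;> norm_num
    refine (Finset.sum_le_sum fun u _ => this u).trans ?_
    rw [Finset.sum_add_distrib, ← Finset.mul_sum, ← Finset.mul_sum]
    simp; norm_num
  have hPy : ∀ u, P.mulVec y u = P u v - P u w := by
    intro u
    simp [hy, Matrix.mulVec_sub, Matrix.col]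
  have hsumP : ∑ u, P.mulVec y u = 0 := by
    rw [hP]
    have : ∀ j, ∀ y : Fin n → ℝ, ∑ u, (roundMatrix Ms ^ j).mulVec y u = ∑ u, y u := by
      intro j
      induction j with
      | zero => intro y; simp
      | succ j ih => intro y; rw [pow_succ, ← Matrix.mulVec_mulVec, ih, hsum]
    rw [this, hy0]
  have hb : ∀ u, |P.mulVec y u| ≤ 2 * q ^ k := by
    intro u
    refine abs_le_of_sq_le_sq ?_ (by positivity) |> fun h => h
    have h1 := Finset.single_le_sum (f := fun u => (P.mulVec y u) ^ 2) (fun i _ => sq_nonneg _)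
      (Finset.mem_univ u)
    have h2 := hpow k y hy0
    have h3 : (q ^ k) ^ 2 * ∑ u, y u ^ 2 ≤ (q ^ k) ^ 2 * 4 :=
      mul_le_mul_of_nonneg_left hyb (by positivity)
    calc _ ≤ _ := h1
      _ ≤ _ := h2
      _ ≤ _ := h3
      _ = _ := by ring
  set z : Fin n := ⟨0, hn⟩
  have hval : Matrix.vecMul ξ P v - Matrix.vecMul ξ P w = ∑ u, (ξ u - ξ z) * P.mulVec y u := by
    simp only [sub_mul, Finset.sum_sub_distrib, ← Finset.mul_sum, hsumP]
    simp only [hPy, Matrix.vecMul, dotProduct, mul_sub, Finset.sum_sub_distrib]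
    ring
  rw [hval]
  calc _ ≤ ∑ u, |(ξ u - ξ z) * P.mulVec y u| := Finset.abs_sum_le_sum_abs _ _
    _ ≤ ∑ u : Fin n, 1 * (2 * q ^ k) := by
      refine Finset.sum_le_sum fun u _ => ?_
      rw [abs_mul]
      exact mul_le_mul ((le_disc ξ u z).trans hξ) (hb u) (abs_nonneg _) (by norm_num)
    _ = n * (2 * q ^ k) := by simp
    _ ≤ n * (2 * (1 / (2 * n * n))) := by gcongr
    _ = (n:ℝ)⁻¹ := by field_simp

theorem stmt14 (ε : ℝ) (hε : 0 < ε) :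
    ∃ N₀ : ℕ, ∀ n : ℕ, N₀ ≤ n →
    ∀ d : ℕ, ∀ hd : 0 < d, ∀ Ms : Fin d → Matching n,
    lamMax (roundMatrix Ms) < 1 →
    ∀ x : Fin n → ℤ, (∀ u, 0 ≤ x u) →
    (∑ u, (x u : ℝ)) ≤ (n : ℝ) ^ (1 - ε) →
    1 - 2 / (n : ℝ) ≤
      pr (fun ω : Fin (tauCont (circuit hd Ms) 1 ((n : ℝ)⁻¹)) → Fin n → Fin n → Bool =>
        discZ (loads (circuit hd Ms) (lift (orientDefault n) ω) x
            (tauCont (circuit hd Ms) 1 ((n : ℝ)⁻¹)))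
          ≤ 9 / ε) := by
  classical
  refine ⟨2, ?_⟩
  intro n hn d hd Ms hl x hx hxs
  have hsm : IsSmoothing (circuit hd Ms) 0 (tauCont (circuit hd Ms) 1 ((n : ℝ)⁻¹)) 1 ((n:ℝ)⁻¹) :=
    Nat.sInf_mem (s := {t | IsSmoothing (circuit hd Ms) 0 t 1 ((n:ℝ)⁻¹)})
      (smoothing_exists (by omega) hd Ms hl)
  generalize tauCont (circuit hd Ms) 1 ((n : ℝ)⁻¹) = T at hsm ⊢
  generalize circuit hd Ms = M at hsm ⊢
  have hn2 : (2:ℝ) ≤ n := by exact_mod_cast hn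
  have hn0 : (0:ℝ) < n := by linarith
  set z : ℝ := (n:ℝ) ^ ε with hz
  have hz1 : 1 ≤ z := Real.one_le_rpow (by linarith) hε.le
  set X := fun (ω : Fin T → Fin n → Fin n → Bool) => loads M (lift (orientDefault n) ω) x T with hX
  have hX0 : ∀ ω u, 0 ≤ X ω u := fun ω u => loads_nonneg M _ x hx T u
  set C : ℝ := (Fintype.card (Fin T → Fin n → Fin n → Bool) : ℝ) with hC
  have hC0 : 0 < C := by rw [hC]; exact_mod_cast Fintype.card_pos
  -- moment bound
  have hmom : ∀ v, ∑ ω, z ^ (X ω v).toNat ≤ C * 8 := by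
    intro v
    set g : Fin n → ℝ := (fun _ => 1) + (z - 1) • Pi.single v 1 with hg
    have hgv : g v = z := by simp [hg]
    have hgo : ∀ u, u ≠ v → g u = 1 := by intro u hu; simp [hg, hu]
    have hg0 : ∀ u, 0 ≤ g u := by
      intro u
      by_cases h : u = v
      · rw [h, hgv]; linarith
      · rw [hgo u h]; norm_num
    have h1 := main_sum M x hx T g hg0
    have h2 : ∀ ω, ∏ u, g u ^ (X ω u).toNat = z ^ (X ω v).toNat := by
      intro ω
      rw [Finset.prod_eq_single v, hgv]
      · intro b _ hb; rw [hgo b hb, one_pow]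
      · simp
    simp only [hX] at h2 ⊢
    rw [Finset.sum_congr rfl (fun ω _ => h2 ω)] at h1
    refine h1.trans (mul_le_mul_of_nonneg_left ?_ hC0.le)
    have hone : (prodMatrix M 1 T).mulVec (fun _ => 1) = fun _ => 1 := by
      have := list_one ((List.range' 1 (T + 1 - 1)).map M)
      rwa [List.map_map] at this
    have hnn : ∀ T, ∀ g : Fin n → ℝ, (∀ u, 0 ≤ g u) → ∀ u, 0 ≤ (prodMatrix M 1 T).mulVec g u := by
      intro T
      induction T with
      | zero => intro g hg u; simpa [prodMatrix] using hg u
      | succ T ih =>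
        intro g hg u
        rw [prodMatrix_succ, ← Matrix.mulVec_mulVec]
        refine ih _ (fun w => ?_) u
        rw [mv_apply]
        linarith [hg w, hg ((M (T+1)).f w)]
    have hent : ∀ u, (prodMatrix M 1 T).mulVec g u ≤ Real.exp (2 * z / n) := by
      intro u
      rw [hg, Matrix.mulVec_add, hone, Matrix.mulVec_smul]
      simp only [Pi.add_apply, Pi.smul_apply, Matrix.mulVec_single_one, Matrix.col, smul_eq_mul,
        Matrix.transpose_apply]
      have e1 := entry_bound (by omega) M T hsm u v
      have e2 : (z - 1) * prodMatrix M 1 T u v ≤ (z - 1) * (2 / n) :=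
        mul_le_mul_of_nonneg_left e1 (by linarith)
      have e3 := Real.add_one_le_exp (2 * z / n)
      have e4 : (z - 1) * (2 / n) ≤ 2 * z / n := by
        rw [mul_div_assoc', div_le_div_iff_of_pos_right hn0]; linarith
      linarith
    calc ∏ u, ((prodMatrix M 1 T).mulVec g u) ^ (x u).toNat
        ≤ ∏ u, Real.exp (2 * z / n * x u) := by
          refine Finset.prod_le_prod (fun u _ => pow_nonneg (hnn T g hg0 u) _) fun u _ => ?_
          refine (pow_le_pow_left₀ (hnn T g hg0 u) (hent u) _).trans (le_of_eq ?_)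
          rw [← Real.exp_nat_mul, mul_comm]
          congr 2
          have : ((x u).toNat : ℤ) = x u := Int.toNat_of_nonneg (hx u)
          exact_mod_cast congrArg (fun a : ℤ => (a:ℝ)) this
      _ = Real.exp (2 * z / n * ∑ u, (x u : ℝ)) := by rw [← Real.exp_sum, Finset.mul_sum]
      _ ≤ Real.exp 2 := by
          apply Real.exp_le_exp.2
          calc _ ≤ 2 * z / n * (n:ℝ) ^ (1 - ε) := by gcongr
            _ = 2 * (n ^ ε * (n:ℝ) ^ (1 - ε)) / n := by rw [hz]; ring
            _ = 2 := by
              rw [← Real.rpow_add hn0]; simp; field_simp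
      _ ≤ 8 := by
          have := Real.exp_one_lt_d9
          have h0 := Real.exp_pos 1
          rw [show (2:ℝ) = 1 + 1 by norm_num, Real.exp_add]
          nlinarith
  -- bad events
  set A := fun ω => discZ (X ω) ≤ 9 / ε with hA
  have hbad : ∀ ω, ¬ A ω → (n:ℝ) ^ 9 ≤ ∑ v, z ^ (X ω v).toNat := by
    intro ω hω
    have : ∃ v, 9 / ε < X ω v := by
      by_contra hcon
      push Not at hcon
      apply hω
      refine disc_le _ _ (by positivity) ?_
      intro u v
      have h1 : (0:ℝ) ≤ X ω u := by exact_mod_cast hX0 ω u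
      have h2 : (0:ℝ) ≤ X ω v := by exact_mod_cast hX0 ω v
      rw [abs_le]
      constructor <;> linarith [hcon u, hcon v]
    obtain ⟨v, hv⟩ := this
    have h1 : z ^ (X ω v).toNat ≤ ∑ v, z ^ (X ω v).toNat :=
      Finset.single_le_sum (f := fun v => z ^ (X ω v).toNat) (fun i _ => by positivity)
        (Finset.mem_univ v)
    refine le_trans ?_ h1
    rw [hz, ← Real.rpow_natCast, ← Real.rpow_natCast, ← Real.rpow_mul hn0.le]
    apply Real.rpow_le_rpow_of_exponent_le (by linarith)
    have h2 : (((X ω v).toNat : ℕ) : ℝ) = X ω v := by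
      exact_mod_cast congrArg (fun a : ℤ => (a:ℝ)) (Int.toNat_of_nonneg (hX0 ω v))
    rw [h2]
    rw [div_lt_iff₀ hε] at hv
    push_cast
    linarith
  have hcount : ((Finset.univ.filter fun ω => ¬ A ω).card : ℝ) * (n:ℝ)^9 ≤ n * (C * 8) := by
    calc _ = ∑ ω ∈ Finset.univ.filter (fun ω => ¬ A ω), (n:ℝ)^9 := by simp
      _ ≤ ∑ ω ∈ Finset.univ.filter (fun ω => ¬ A ω), ∑ v, z ^ (X ω v).toNat :=
        Finset.sum_le_sum fun ω h => hbad ω (Finset.mem_filter.1 h).2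
      _ ≤ ∑ ω, ∑ v, z ^ (X ω v).toNat :=
        Finset.sum_le_sum_of_subset_of_nonneg (Finset.filter_subset _ _)
          (fun _ _ _ => Finset.sum_nonneg fun _ _ => by positivity)
      _ = ∑ v, ∑ ω, z ^ (X ω v).toNat := Finset.sum_comm
      _ ≤ ∑ v : Fin n, C * 8 := Finset.sum_le_sum fun v _ => hmom v
      _ = _ := by simp
  have hsplit : ((Finset.univ.filter A).card : ℝ)
      + ((Finset.univ.filter fun ω => ¬ A ω).card : ℝ) = C := by
    rw [hC, ← Finset.card_univ]
    exact_mod_cast Finset.card_filter_add_card_filter_not (s := Finset.univ) A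
  have hpr : pr A = ((Finset.univ.filter A).card : ℝ) / C := by
    unfold pr
    congr!
  change 1 - 2 / (n:ℝ) ≤ pr A
  rw [hpr, le_div_iff₀ hC0]
  set B := ((Finset.univ.filter fun ω => ¬ A ω).card : ℝ) with hB
  have hB0 : 0 ≤ B := by positivity
  have h4 : (4:ℝ) ≤ n ^ 7 := by
    calc (4:ℝ) ≤ 2 ^ 7 := by norm_num
      _ ≤ n ^ 7 := by gcongr
  have h5 : B * n ≤ 2 * C := by
    have h6 : (n * n) * (B * n) * (n:ℝ)^7 ≤ (n * n) * (2 * C) * 4 := by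
      have : (n * n) * (B * n) * (n:ℝ)^7 = n * (B * n ^ 9) := by ring
      rw [this]
      calc _ ≤ n * (n * (C * 8)) := by gcongr
        _ = _ := by ring
    have h7 : (n * n) * (B * n) * 4 ≤ (n * n) * (B * n) * (n:ℝ)^7 := by gcongr
    have h8 := h7.trans h6
    have h9 : (0:ℝ) < n * n := by positivity
    have h10 : (n * n) * (B * n) ≤ (n * n) * (2 * C) := by linarith
    exact le_of_mul_le_mul_left h10 h9
  have h6 : B ≤ 2 / n * C := by
    rw [div_mul_eq_mul_div, le_div_iff₀ hn0]; exact h5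
  linarith

end LB
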